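/- arXiv:1703.01830 — 3 statements merged into one kernel-verified Lean document; each statement's English description precedes it below -/
import Mathlib

section
/- Let f_1, …, f_r : 2^V → ℝ be submodular with f_i(∅) = 0, suppose each f_i has effective support C_i (i.e., f_i(S) = f_i(S ∩ C_i) for all S ⊆ V), and let f = Σ_{i=1}^r f_i. Then for every x ∈ B(f) there exist x_1, …, x_r with x_i ∈ B(f_i), supp(x_i) ⊆ C_i for each i, and x = Σ_{i=1}^r x_i. -/
/-!
The base polytope `B(g)` is compact and convex, and a linear functional `w` is maximized over it by
Edmonds' greedy vertex, whose entries are the increments of `g` along an ordering of `V` by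
decreasing weight: every base is dominated by it on initial segments, with equality on all of `V`,
and Abel summation carries this over to the weighted sums. For a fixed ordering the greedy vertex
depends linearly on `g`, so the support function of `B(∑ i, f i)` is at most that of the Minkowski
sum `∑ i, B(f i)`. Hence, by Hahn–Banach, `B(∑ i, f i) ⊆ ∑ i, B(f i)`. A base is bounded at `v` by
the largest and the smallest marginal value of `v`, both zero when `v` is outside an effective
support.
-/

open Finset

/-- A set function `g` on subsets of `V` is submodular. -/
def Submodular {V : Type*} [DecidableEq V] (g : Finset V → ℝ) : Prop :=
  ∀ X Y : Finset V, g X + g Y ≥ g (X ∪ Y) + g (X ∩ Y)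

/-- `x` belongs to the base polytope `B(g)` of the set function `g`. -/
def InBasePolytope {V : Type*} [Fintype V] (g : Finset V → ℝ) (x : V → ℝ) : Prop :=
  (∀ S : Finset V, ∑ v ∈ S, x v ≤ g S) ∧ (∑ v, x v = g Finset.univ)

/-- Euclidean norm of a finitely indexed real vector. -/
noncomputable def norm2 {ι : Type*} [Fintype ι] (x : ι → ℝ) : ℝ :=
  Real.sqrt (∑ i, x i ^ 2)

/-- Euclidean distance from a point to a set of vectors. -/
noncomputable def distSet {ι : Type*} [Fintype ι] (y : ι → ℝ) (K : Set (ι → ℝ)) : ℝ :=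
  sInf ((fun z => norm2 (y - z)) '' K)

open scoped Matrix Pointwise

theorem exists_linearOrder_monotone {α R : Type*} [LinearOrder R] (w : α → R) :
    ∃ _ : LinearOrder α, Monotone w := by
  obtain ⟨_, -⟩ := exists_wellFoundedLT α
  let k : α → R ×ₗ α := fun v ↦ toLex (w v, v)
  have hk : Function.Injective k := fun _ _ h ↦ congrArg (fun p ↦ (ofLex p).2) h
  exact ⟨LinearOrder.lift' k hk, fun _ _ h ↦ Prod.Lex.monotone_fst_ofLex h⟩

section Greedy

variable {V : Type*} [LinearOrder V] [LocallyFiniteOrderBot V]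

theorem isLowerSet_induction {motive : ∀ T : Finset V, IsLowerSet (T : Set V) → Prop}
    (empty : motive ∅ (by simpa using isLowerSet_empty))
    (Iic : ∀ a, motive (Iio a) (by simpa using isLowerSet_Iio a) →
      motive (Iic a) (by simpa using isLowerSet_Iic a))
    (T : Finset V) (hT : IsLowerSet (T : Set V)) : motive T hT := by
  induction T using Finset.induction_on_max with
  | empty => exact empty
  | insert a s hs ih =>
    have hIio : Iio a = s := by
      ext u
      refine ⟨fun hu ↦ ?_, fun hu ↦ mem_Iio.2 (hs u hu)⟩
      have hu' : u ∈ insert a s := hT (mem_Iio.1 hu).le (mem_insert_self a s)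
      exact mem_of_mem_insert_of_ne hu' (mem_Iio.1 hu).ne
    subst hIio
    simpa only [Iio_insert] using Iic a (ih _)

theorem mul_sum_le_sum_mul_of_antitone {R : Type*} [Semiring R] [PartialOrder R] [IsOrderedRing R]
    {w z : V → R} (hw : Antitone w) (hz : ∀ a, 0 ≤ ∑ v ∈ Iic a, z v) {T : Finset V}
    (hT : IsLowerSet (T : Set V)) {c : R} (hc : ∀ v ∈ T, c ≤ w v) :
    c * ∑ v ∈ T, z v ≤ ∑ v ∈ T, w v * z v := by
  induction T, hT using isLowerSet_induction generalizing c with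
  | empty => simp
  | Iic a ih =>
    calc c * ∑ v ∈ Iic a, z v
        ≤ w a * ∑ v ∈ Iic a, z v :=
          mul_le_mul_of_nonneg_right (hc a (mem_Iic.2 le_rfl)) (hz a)
      _ = w a * z a + w a * ∑ v ∈ Iio a, z v := by
          rw [← Iio_insert, sum_insert notMem_Iio_self, mul_add]
      _ ≤ w a * z a + ∑ v ∈ Iio a, w v * z v := by
          gcongr
          exact ih fun v hv ↦ hw (mem_Iio.1 hv).le
      _ = ∑ v ∈ Iic a, w v * z v := by
          rw [← Iio_insert, sum_insert notMem_Iio_self]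

/-- Edmonds' greedy vertex of `g` for the ordering of `V`: its entry at `v` is the marginal value of
`v` over the set of its predecessors. -/
def greedyVertex (g : Finset V → ℝ) (v : V) : ℝ :=
  g (Iic v) - g (Iio v)

theorem greedyVertex_sum {ι : Type*} (s : Finset ι) (f : ι → Finset V → ℝ) :
    greedyVertex (∑ i ∈ s, f i) = ∑ i ∈ s, greedyVertex (f i) := by
  ext v
  simp only [greedyVertex, Finset.sum_apply, sum_sub_distrib]

theorem sum_greedyVertex_of_isLowerSet (g : Finset V → ℝ) {T : Finset V}
    (hT : IsLowerSet (T : Set V)) : ∑ v ∈ T, greedyVertex g v = g T - g ∅ := by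
  induction T, hT using isLowerSet_induction with
  | empty => simp
  | Iic a ih =>
    rw [← Iio_insert, sum_insert notMem_Iio_self, ih, Iio_insert, greedyVertex]
    ring

theorem Submodular.sum_greedyVertex_le {g : Finset V → ℝ} (hg : Submodular g) (T : Finset V) :
    ∑ v ∈ T, greedyVertex g v ≤ g T - g ∅ := by
  induction T using Finset.induction_on_max with
  | empty => simp
  | insert a s hs ih =>
    have hsub : s ⊆ Iio a := fun u hu ↦ mem_Iio.2 (hs u hu)
    have hunion : insert a s ∪ Iio a = Iic a := by
      rw [insert_union, union_eq_right.2 hsub, Iio_insert]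
    have hinter : insert a s ∩ Iio a = s := by
      rw [insert_inter_of_notMem notMem_Iio_self, inter_eq_left.2 hsub]
    have hmarginal := hg (insert a s) (Iio a)
    rw [hunion, hinter] at hmarginal
    rw [sum_insert fun ha ↦ (hs a ha).false, greedyVertex]
    linarith

variable [Fintype V] {g : Finset V → ℝ}

theorem Submodular.inBasePolytope_greedyVertex (hg : Submodular g) (h0 : g ∅ = 0) :
    InBasePolytope g (greedyVertex g) := by
  refine ⟨fun S ↦ ?_, ?_⟩
  · simpa only [h0, sub_zero] using hg.sum_greedyVertex_le S
  · simpa only [h0, sub_zero] using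
      sum_greedyVertex_of_isLowerSet g (T := univ) (by simpa using isLowerSet_univ)

theorem InBasePolytope.dotProduct_le_greedyVertex {x : V → ℝ} (hx : InBasePolytope g x)
    (h0 : g ∅ = 0) {w : V → ℝ} (hw : Antitone w) : w ⬝ᵥ x ≤ w ⬝ᵥ greedyVertex g := by
  obtain ⟨c, hc⟩ := Finite.bddBelow_range w
  have hsum {T : Finset V} (hT : IsLowerSet (T : Set V)) :
      ∑ v ∈ T, (greedyVertex g - x) v = g T - ∑ v ∈ T, x v := by
    simp only [Pi.sub_apply, sum_sub_distrib, sum_greedyVertex_of_isLowerSet g hT, h0, sub_zero]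
  have hIic (a : V) : 0 ≤ ∑ v ∈ Iic a, (greedyVertex g - x) v := by
    rw [hsum (by simpa using isLowerSet_Iic a), sub_nonneg]
    exact hx.1 _
  have huniv : IsLowerSet ((univ : Finset V) : Set V) := by simpa using isLowerSet_univ
  have habel : 0 ≤ w ⬝ᵥ (greedyVertex g - x) := by
    simpa only [hsum huniv, hx.2, sub_self, mul_zero, dotProduct] using
      mul_sum_le_sum_mul_of_antitone hw hIic huniv fun v _ ↦ hc ⟨v, rfl⟩
  rwa [dotProduct_sub, sub_nonneg] at habel

end Greedy

section SupportFunction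

theorem isCompact_sum {ι M : Type*} [AddCommMonoid M] [TopologicalSpace M] [ContinuousAdd M]
    {s : Finset ι} {K : ι → Set M} (hK : ∀ i ∈ s, IsCompact (K i)) : IsCompact (∑ i ∈ s, K i) :=
  sum_induction K IsCompact (fun _ _ ↦ IsCompact.add) isCompact_singleton hK

theorem mem_of_forall_exists_dotProduct_le {V : Type*} [Fintype V] {K : Set (V → ℝ)}
    (hconv : Convex ℝ K) (hclosed : IsClosed K) {x : V → ℝ}
    (h : ∀ w : V → ℝ, ∃ y ∈ K, w ⬝ᵥ x ≤ w ⬝ᵥ y) : x ∈ K := by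
  classical
  by_contra hx
  obtain ⟨φ, u, hφK, hφx⟩ := geometric_hahn_banach_closed_point hconv hclosed hx
  obtain ⟨w, hw⟩ := (dotProductEquiv ℝ V).surjective φ.toLinearMap
  have hφ (z : V → ℝ) : w ⬝ᵥ z = φ z := DFunLike.congr_fun hw z
  obtain ⟨y, hyK, hxy⟩ := h w
  rw [hφ, hφ] at hxy
  linarith [hφK y hyK]

end SupportFunction

section BasePolytope

variable {V : Type*} [Fintype V]

/-- The base polytope of `g`, as a set of vectors. -/
def basePolytope (g : Finset V → ℝ) : Set (V → ℝ) :=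
  {x | InBasePolytope g x}

theorem basePolytope_eq_iInter_inter (g : Finset V → ℝ) :
    basePolytope g = (⋂ S : Finset V, {x | ∑ v ∈ S, x v ≤ g S}) ∩ {x | ∑ v, x v = g univ} := by
  ext x
  simp only [basePolytope, InBasePolytope, Set.mem_inter_iff, Set.mem_iInter, Set.mem_ofPred_eq]

theorem convex_basePolytope (g : Finset V → ℝ) : Convex ℝ (basePolytope g) := by
  have hlin (S : Finset V) : IsLinearMap ℝ fun x : V → ℝ ↦ ∑ v ∈ S, x v :=
    ⟨fun _ _ ↦ sum_add_distrib, fun _ _ ↦ (mul_sum ..).symm⟩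
  rw [basePolytope_eq_iInter_inter]
  exact (convex_iInter fun S ↦ convex_halfSpace_le (hlin S) _).inter
    (convex_hyperplane (hlin univ) _)

theorem isClosed_basePolytope (g : Finset V → ℝ) : IsClosed (basePolytope g) := by
  rw [basePolytope_eq_iInter_inter]
  exact (isClosed_iInter fun S ↦ isClosed_le (by fun_prop) continuous_const).inter
    (isClosed_eq (by fun_prop) continuous_const)

theorem InBasePolytope.mem_Icc [DecidableEq V] {g : Finset V → ℝ} {x : V → ℝ}
    (hx : InBasePolytope g x) (v : V) : x v ∈ Set.Icc (g univ - g (univ.erase v)) (g {v}) := by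
  refine ⟨?_, by simpa only [sum_singleton] using hx.1 {v}⟩
  have herase := hx.1 (univ.erase v)
  have htotal := hx.2
  rw [← add_sum_erase univ x (mem_univ v)] at htotal
  linarith

theorem isCompact_basePolytope (g : Finset V → ℝ) : IsCompact (basePolytope g) := by
  classical
  exact isCompact_Icc.of_isClosed_subset (isClosed_basePolytope g) fun _ hx ↦
    ⟨fun v ↦ (hx.mem_Icc v).1, fun v ↦ (hx.mem_Icc v).2⟩

variable [DecidableEq V]

theorem InBasePolytope.eq_zero_of_notMem {g : Finset V → ℝ} {x : V → ℝ} (hx : InBasePolytope g x)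
    (h0 : g ∅ = 0) {C : Finset V} (hC : ∀ S, g S = g (S ∩ C)) {v : V} (hv : v ∉ C) : x v = 0 := by
  have hsingleton : g {v} = 0 := by rw [hC, singleton_inter_of_notMem hv, h0]
  have herase : g (univ.erase v) = g univ := by
    rw [hC, erase_inter, erase_eq_of_notMem fun h ↦ hv (mem_of_mem_inter_right h), ← hC]
  simpa only [hsingleton, herase, sub_self, Set.Icc_self, Set.mem_singleton_iff] using hx.mem_Icc v

variable {ι : Type*} [Fintype ι] {f : ι → Finset V → ℝ}

theorem InBasePolytope.exists_dotProduct_le {x : V → ℝ} (hx : InBasePolytope (∑ i, f i) x)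
    (hsub : ∀ i, Submodular (f i)) (h0 : ∀ i, f i ∅ = 0) (w : V → ℝ) :
    ∃ y ∈ ∑ i, basePolytope (f i), w ⬝ᵥ x ≤ w ⬝ᵥ y := by
  obtain ⟨_, hw⟩ := exists_linearOrder_monotone (OrderDual.toDual ∘ w)
  let _ : LocallyFiniteOrderBot V := .ofIic V (fun a ↦ {v | v ≤ a}) (by simp)
  have hvertex (i : ι) : greedyVertex (f i) ∈ basePolytope (f i) :=
    -- `convert` identifies the ambient `DecidableEq V` with the one of the new linear order.
    Submodular.inBasePolytope_greedyVertex (by convert hsub i) (h0 i)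
  refine ⟨_, Set.finsetSum_mem_finsetSum _ _ _ fun i _ ↦ hvertex i, ?_⟩
  rw [← greedyVertex_sum]
  exact hx.dotProduct_le_greedyVertex (by simp [h0]) hw

theorem basePolytope_sum (hsub : ∀ i, Submodular (f i)) (h0 : ∀ i, f i ∅ = 0) :
    basePolytope (∑ i, f i) = ∑ i, basePolytope (f i) := by
  apply Set.Subset.antisymm
  · have hcompact : IsCompact (∑ i, basePolytope (f i)) :=
      isCompact_sum fun i _ ↦ isCompact_basePolytope (f i)
    have hconvex : Convex ℝ (∑ i, basePolytope (f i)) :=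
      convex_sum _ fun i _ ↦ convex_basePolytope (f i)
    intro x (hx : InBasePolytope _ x)
    exact mem_of_forall_exists_dotProduct_le hconvex hcompact.isClosed
      (hx.exists_dotProduct_le hsub h0)
  · intro x hx
    obtain ⟨y, hy, rfl⟩ := (Set.mem_fintype_sum _ _).1 hx
    have hswap (S : Finset V) : ∑ v ∈ S, (∑ i, y i) v = ∑ i, ∑ v ∈ S, y i v := by
      simp only [Finset.sum_apply]
      exact sum_comm
    refine ⟨fun S ↦ ?_, ?_⟩
    · rw [hswap, Finset.sum_apply]
      exact sum_le_sum fun i _ ↦ (hy i).1 S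
    · rw [hswap, Finset.sum_apply]
      exact sum_congr rfl fun i _ ↦ (hy i).2

theorem base_polytope_decomposition_general (hsub : ∀ i, Submodular (f i)) (h0 : ∀ i, f i ∅ = 0)
    (C : ι → Finset V) (hC : ∀ i (S : Finset V), f i S = f i (S ∩ C i))
    (x : V → ℝ) (hx : InBasePolytope (fun S ↦ ∑ i, f i S) x) :
    ∃ y : ι → V → ℝ,
      (∀ i, InBasePolytope (f i) (y i)) ∧
      (∀ i, ∀ v : V, v ∉ C i → y i v = 0) ∧
      ∀ v, x v = ∑ i, y i v := by
  have hx' : x ∈ basePolytope (∑ i, f i) := by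
    rwa [← Finset.sum_fn] at hx
  rw [basePolytope_sum hsub h0, Set.mem_fintype_sum] at hx'
  obtain ⟨y, hy, rfl⟩ := hx'
  exact ⟨y, fun i ↦ hy i, fun i v hv ↦ (hy i).eq_zero_of_notMem (h0 i) (hC i) hv,
    fun v ↦ Finset.sum_apply v univ y⟩

end BasePolytope

/-- every `x ∈ B(f)`, for `f = Σᵢ fᵢ` with effective supports `Cᵢ`,
decomposes as `x = Σᵢ xᵢ` with `xᵢ ∈ B(fᵢ)` and `supp(xᵢ) ⊆ Cᵢ`. -/
theorem base_polytope_decomposition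
    {V : Type*} [Fintype V] [DecidableEq V] (r : ℕ)
    (f : Fin r → Finset V → ℝ)
    (hsub : ∀ i, Submodular (f i)) (h0 : ∀ i, f i ∅ = 0)
    (Csupp : Fin r → Finset V)
    (hCs : ∀ i (S : Finset V), f i S = f i (S ∩ Csupp i))
    (x : V → ℝ) (hx : InBasePolytope (fun S => ∑ i, f i S) x) :
    ∃ xi : Fin r → V → ℝ,
      (∀ i, InBasePolytope (f i) (xi i)) ∧
      (∀ i, ∀ v : V, v ∉ Csupp i → xi i v = 0) ∧
      ∀ v, x v = ∑ i, xi i v :=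
  base_polytope_decomposition_general hsub h0 Csupp hCs x hx
end

section
/- Let f : 2^V → ℝ be submodular with f(∅) = 0 and let s* be the unique minimizer of ‖s‖₂² over B(f). Then the set S⁻ = {v ∈ V : s*(v) < 0} is a minimizer of f (f(S⁻) ≤ f(T) for all T ⊆ V), and every minimizer T of f satisfies S⁻ ⊆ T; i.e., S⁻ is the unique smallest minimizer of f. -/
open Finset

/-!
Call `S` tight for `x ∈ B(f)` when `x(S) = f(S)`. By submodularity the tight sets form a lattice,
and only tight sets constrain small moves inside `B(f)`. If `x(u) < x(v)` at the min-norm point,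
then moving mass from `v` to `u` would shorten `x`, so some tight set contains `u` but not `v`.
Taking unions and intersections of such separating sets shows that `S⁻` is tight. Hence
`f(S⁻) = x(S⁻) ≤ x(T) ≤ f(T)` for every `T`, and equality forces `T` to contain every negative
coordinate.
-/

open Filter Topology

theorem mem_of_supClosed_of_infClosed_of_separates {α : Type*} [Fintype α] [DecidableEq α]
    {L : Set (Finset α)} (hsup : SupClosed L) (hinf : InfClosed L)
    (hbot : ∅ ∈ L) (htop : univ ∈ L) {N : Finset α}
    (hsep : ∀ u ∈ N, ∀ v ∉ N, ∃ T ∈ L, u ∈ T ∧ v ∉ T) : N ∈ L := by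
  choose! T hTL huT hvT using hsep
  have hN : (N.sup fun u ↦ Nᶜ.inf (T u)) = N := by
    apply Subset.antisymm
    · intro w hw
      obtain ⟨u, hu, hwu⟩ := mem_sup.1 hw
      by_contra hwN
      exact hvT u hu w hwN (mem_inf.1 hwu w (mem_compl.2 hwN))
    · exact fun u hu ↦ mem_sup.2 ⟨u, hu, mem_inf.2 fun v hv ↦ huT u hu v (mem_compl.1 hv)⟩
  rw [← hN]
  exact sup_induction hbot (fun _ hA _ hB ↦ hsup hA hB) fun u hu ↦
    inf_induction htop (fun _ hA _ hB ↦ hinf hA hB) fun v hv ↦ hTL u hu v (mem_compl.1 hv)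

theorem sum_mul_nonneg_of_eventually_sum_sq_le {ι : Type*} [Fintype ι] {x d : ι → ℝ}
    (h : ∀ᶠ ε : ℝ in 𝓝[>] 0, ∑ i, x i ^ 2 ≤ ∑ i, (x + ε • d) i ^ 2) :
    0 ≤ ∑ i, x i * d i := by
  have hexpand (ε : ℝ) : ∑ i, (x + ε • d) i ^ 2 =
      ∑ i, x i ^ 2 + ε * (2 * ∑ i, x i * d i + ε * ∑ i, d i ^ 2) := by
    simp only [Pi.add_apply, Pi.smul_apply, smul_eq_mul, mul_sum, ← sum_add_distrib]
    exact sum_congr rfl fun i _ ↦ by ring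
  have hquot : ∀ᶠ ε : ℝ in 𝓝[>] 0, 0 ≤ 2 * ∑ i, x i * d i + ε * ∑ i, d i ^ 2 := by
    filter_upwards [h, self_mem_nhdsWithin] with ε hle (hε : 0 < ε)
    rw [hexpand, le_add_iff_nonneg_right] at hle
    exact nonneg_of_mul_nonneg_right hle hε
  have hlim : Tendsto (fun ε : ℝ ↦ 2 * ∑ i, x i * d i + ε * ∑ i, d i ^ 2) (𝓝[>] 0)
      (𝓝 (2 * ∑ i, x i * d i)) :=
    tendsto_nhdsWithin_of_tendsto_nhds (Continuous.tendsto' (by fun_prop) _ _ (by simp))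
  linarith [ge_of_tendsto hlim hquot]

section SignPattern

variable {V : Type*} {x : V → ℝ} {N : Finset V}

theorem sum_le_sum_of_nonpos_on_of_nonneg_off (hneg : ∀ v ∈ N, x v ≤ 0)
    (hpos : ∀ v ∉ N, 0 ≤ x v) (T : Finset V) : ∑ v ∈ N, x v ≤ ∑ v ∈ T, x v := by
  classical
  have hNT : ∑ v ∈ N \ T, x v ≤ 0 := sum_nonpos fun v hv ↦ hneg v (mem_sdiff.1 hv).1
  have hTN : 0 ≤ ∑ v ∈ T \ N, x v := sum_nonneg fun v hv ↦ hpos v (mem_sdiff.1 hv).2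
  linarith [sum_sdiff_sub_sum_sdiff (s₁ := N) (s₂ := T) (f := x)]

theorem subset_of_sum_le_sum_of_neg_on_of_nonneg_off (hneg : ∀ v ∈ N, x v < 0)
    (hpos : ∀ v ∉ N, 0 ≤ x v) {T : Finset V} (hT : ∑ v ∈ T, x v ≤ ∑ v ∈ N, x v) : N ⊆ T := by
  classical
  by_contra hNT
  have hlt : ∑ v ∈ N \ T, x v < 0 :=
    sum_neg (fun v hv ↦ hneg v (mem_sdiff.1 hv).1) (sdiff_nonempty.2 hNT)
  have hTN : 0 ≤ ∑ v ∈ T \ N, x v := sum_nonneg fun v hv ↦ hpos v (mem_sdiff.1 hv).2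
  linarith [sum_sdiff_sub_sum_sdiff (s₁ := N) (s₂ := T) (f := x)]

end SignPattern

/-- The set `S` is tight for `x` with respect to `f`: the constraint `x(S) ≤ f(S)` holds with
equality. Membership of `x` in the base polytope is not part of the definition. -/
def IsTight {V : Type*} (f : Finset V → ℝ) (x : V → ℝ) (S : Finset V) : Prop :=
  ∑ v ∈ S, x v = f S

/-- `x` is a point of `B(f)` of least Euclidean norm, compared through squared norms. -/
def IsMinNormPoint {V : Type*} [Fintype V] (f : Finset V → ℝ) (x : V → ℝ) : Prop :=
  InBasePolytope f x ∧ ∀ z, InBasePolytope f z → ∑ v, x v ^ 2 ≤ ∑ v, z v ^ 2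

section Tight

variable {V : Type*} [DecidableEq V] {f : Finset V → ℝ} {x : V → ℝ}

theorem IsTight.union_and_inter (hf : Submodular f) (hx : ∀ S, ∑ v ∈ S, x v ≤ f S)
    {X Y : Finset V} (hX : IsTight f x X) (hY : IsTight f x Y) :
    IsTight f x (X ∪ Y) ∧ IsTight f x (X ∩ Y) := by
  unfold IsTight at *
  have hmod : ∑ v ∈ X ∪ Y, x v + ∑ v ∈ X ∩ Y, x v = ∑ v ∈ X, x v + ∑ v ∈ Y, x v :=
    sum_union_inter
  constructor <;> linarith [hf X Y, hx (X ∪ Y), hx (X ∩ Y)]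

theorem supClosed_isTight (hf : Submodular f) (hx : ∀ S, ∑ v ∈ S, x v ≤ f S) :
    SupClosed {S | IsTight f x S} :=
  fun _ hX _ hY ↦ (IsTight.union_and_inter hf hx hX hY).1

theorem infClosed_isTight (hf : Submodular f) (hx : ∀ S, ∑ v ∈ S, x v ≤ f S) :
    InfClosed {S | IsTight f x S} :=
  fun _ hX _ hY ↦ (IsTight.union_and_inter hf hx hX hY).2

end Tight

section MinNormPoint

variable {V : Type*} [Fintype V] {f : Finset V → ℝ} {x : V → ℝ}

theorem InBasePolytope.eventually_add_smul (hx : InBasePolytope f x) {d : V → ℝ}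
    (hd : ∑ v, d v = 0) (htight : ∀ S, IsTight f x S → ∑ v ∈ S, d v ≤ 0) :
    ∀ᶠ ε : ℝ in 𝓝[>] 0, InBasePolytope f (x + ε • d) := by
  have hsum (ε : ℝ) (S : Finset V) :
      ∑ v ∈ S, (x + ε • d) v = ∑ v ∈ S, x v + ε * ∑ v ∈ S, d v := by
    simp only [Pi.add_apply, Pi.smul_apply, smul_eq_mul, sum_add_distrib, mul_sum]
  have hle (S : Finset V) : ∀ᶠ ε : ℝ in 𝓝[>] 0, ∑ v ∈ S, (x + ε • d) v ≤ f S := by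
    simp only [hsum]
    by_cases hS : IsTight f x S
    · filter_upwards [self_mem_nhdsWithin] with ε (hε : 0 < ε)
      linarith [hx.1 S, mul_nonpos_of_nonneg_of_nonpos hε.le (htight S hS)]
    · have hlim : Tendsto (fun ε : ℝ ↦ ∑ v ∈ S, x v + ε * ∑ v ∈ S, d v) (𝓝[>] 0)
          (𝓝 (∑ v ∈ S, x v)) :=
        tendsto_nhdsWithin_of_tendsto_nhds (Continuous.tendsto' (by fun_prop) _ _ (by simp))
      exact hlim.eventually_le_const (lt_of_le_of_ne (hx.1 S) hS)
  filter_upwards [eventually_all.2 hle] with ε hε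
  exact ⟨hε, by rw [hsum, hd, mul_zero, add_zero, hx.2]⟩

theorem IsMinNormPoint.sum_mul_nonneg_of_forall_isTight (hx : IsMinNormPoint f x)
    {d : V → ℝ} (hd : ∑ v, d v = 0) (htight : ∀ S, IsTight f x S → ∑ v ∈ S, d v ≤ 0) :
    0 ≤ ∑ v, x v * d v :=
  sum_mul_nonneg_of_eventually_sum_sq_le <|
    (hx.1.eventually_add_smul hd htight).mono fun _ ↦ hx.2 _

theorem IsMinNormPoint.exists_isTight_separating (hx : IsMinNormPoint f x) {u v : V}
    (huv : x u < x v) : ∃ T, IsTight f x T ∧ u ∈ T ∧ v ∉ T := by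
  classical
  by_contra! hmem
  let d : V → ℝ := Pi.single u 1 - Pi.single v 1
  have hd (S : Finset V) :
      ∑ w ∈ S, d w = (if u ∈ S then 1 else 0) - (if v ∈ S then 1 else 0) := by
    simp only [d, Pi.sub_apply, sum_sub_distrib, sum_pi_single']
  have htight (S : Finset V) (hS : IsTight f x S) : ∑ w ∈ S, d w ≤ 0 := by
    rw [hd]
    have hmemS : u ∈ S → v ∈ S := hmem S hS
    by_cases hu : u ∈ S
    · simp only [if_pos hu, if_pos (hmemS hu), sub_self, le_refl]
    · rw [if_neg hu]
      split_ifs <;> norm_num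
  have hinner : ∑ w, x w * d w = x u - x v := by
    simp [d, mul_sub, Pi.single_apply]
  have hnonneg : 0 ≤ ∑ w, x w * d w :=
    hx.sum_mul_nonneg_of_forall_isTight (by simp [hd]) htight
  linarith

theorem IsMinNormPoint.isTight_of_forall_lt [DecidableEq V] (hf : Submodular f) (h0 : f ∅ = 0)
    (hx : IsMinNormPoint f x) {N : Finset V} (hN : ∀ u ∈ N, ∀ v ∉ N, x u < x v) :
    IsTight f x N :=
  mem_of_supClosed_of_infClosed_of_separates (supClosed_isTight hf hx.1.1)
    (infClosed_isTight hf hx.1.1) (sum_empty.trans h0.symm) hx.1.2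
    fun u hu v hv ↦ hx.exists_isTight_separating (hN u hu v hv)

end MinNormPoint

/-- the negative-support `S⁻ = {v : s*(v) < 0}` of the min-norm point
`s*` of `B(f)` is the unique smallest minimizer of `f`. -/
theorem min_norm_point_gives_smallest_minimizer
    {V : Type*} [Fintype V] [DecidableEq V]
    (f : Finset V → ℝ) (hsub : Submodular f) (h0 : f ∅ = 0)
    (sstar : V → ℝ)
    (hsB : InBasePolytope f sstar)
    (hsMin : ∀ z : V → ℝ, InBasePolytope f z →
      ∑ v, sstar v ^ 2 ≤ ∑ v, z v ^ 2)
    (Sneg : Finset V) (hSneg : ∀ v : V, v ∈ Sneg ↔ sstar v < 0) :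
    (∀ T : Finset V, f Sneg ≤ f T) ∧
      ∀ T : Finset V, (∀ T' : Finset V, f T ≤ f T') → Sneg ⊆ T := by
  have hneg (v : V) (hv : v ∈ Sneg) : sstar v < 0 := (hSneg v).1 hv
  have hpos (v : V) (hv : v ∉ Sneg) : 0 ≤ sstar v := not_lt.1 (mt (hSneg v).2 hv)
  have htight : ∑ v ∈ Sneg, sstar v = f Sneg :=
    IsMinNormPoint.isTight_of_forall_lt hsub h0 ⟨hsB, hsMin⟩
      fun u hu v hv ↦ (hneg u hu).trans_le (hpos v hv)
  refine ⟨fun T ↦ ?_, fun T hT ↦ subset_of_sum_le_sum_of_neg_on_of_nonneg_off hneg hpos ?_⟩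
  · calc
      f Sneg = ∑ v ∈ Sneg, sstar v := htight.symm
      _ ≤ ∑ v ∈ T, sstar v :=
        sum_le_sum_of_nonpos_on_of_nonneg_off (fun v hv ↦ (hneg v hv).le) hpos T
      _ ≤ f T := hsB.1 T
  · calc
      ∑ v ∈ T, sstar v ≤ f T := hsB.1 T
      _ ≤ f Sneg := hT Sneg
      _ = ∑ v ∈ Sneg, sstar v := htight.symm
end

section
/- Suppose κ > 0 is such that d(y, E) ≤ κ · d(y, 𝒜') for every y ∈ 𝒫 \ E. Then for every y ∈ 𝒫, letting y* be a point of E closest to y, one has ‖A(y − y*)‖₂² ≥ (r / κ²) · ‖y − y*‖₂²; i.e., the objective of (Prox-DSFM) is restricted ℓ-strongly convex with ℓ = r/κ², so ℓ* ≥ r/κ*². -/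
open Finset

/-!
The point of `{a | A a = s}` closest to `y` is obtained by spreading `A y - s` evenly over the `r`
blocks of `y`; it is closest because `‖A w‖ ≤ √r ‖w‖` by Cauchy–Schwarz. Hence
`d(y, {a | A a = s}) = ‖A y - s‖ / √r`. If `x` is a point of `E` closest to `y`, then `A x = s`, and
the hypothesis becomes `‖y - x‖ ≤ κ ‖A (y - x)‖ / √r`, which is squared.
-/

section Euclidean

variable {ι : Type*} [Fintype ι]

theorem norm2_eq_norm_toLp (x : ι → ℝ) : norm2 x = ‖WithLp.toLp 2 x‖ := by
  simp [norm2, EuclideanSpace.norm_eq]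

theorem norm2_nonneg (x : ι → ℝ) : 0 ≤ norm2 x :=
  Real.sqrt_nonneg _

theorem sq_norm2 (x : ι → ℝ) : norm2 x ^ 2 = ∑ i, x i ^ 2 :=
  Real.sq_sqrt (sum_nonneg fun _ _ => sq_nonneg _)

theorem norm2_eq_zero {x : ι → ℝ} : norm2 x = 0 ↔ x = 0 := by
  rw [norm2_eq_norm_toLp, norm_eq_zero, WithLp.toLp_eq_zero]

theorem distSet_eq_norm2_sub {K : Set (ι → ℝ)} {x y : ι → ℝ} (hx : x ∈ K)
    (hmin : ∀ z ∈ K, norm2 (y - x) ≤ norm2 (y - z)) : distSet y K = norm2 (y - x) :=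
  IsLeast.csInf_eq ⟨Set.mem_image_of_mem _ hx, Set.forall_mem_image.2 hmin⟩

end Euclidean

section BlockSum

variable {ι V : Type*} [Fintype ι]

/-- The operator `A y = ∑ i, y_i` of the paper, where the block `y_i` of `y : ι × V → ℝ` is
`fun v => y (i, v)`. -/
def blockSum : (ι × V → ℝ) →ₗ[ℝ] (V → ℝ) where
  toFun y v := ∑ i, y (i, v)
  map_add' _ _ := funext fun _ => sum_add_distrib
  map_smul' _ _ := funext fun _ => (mul_sum _ _ _).symm

theorem blockSum_apply (y : ι × V → ℝ) (v : V) : blockSum y v = ∑ i, y (i, v) :=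
  rfl

/-- The affine space `{a | A a = s}`, which is the paper's `𝒜'` when `s = s*`. It is written
coordinatewise to agree by definition with the sets in `ell_star_from_kappa`. -/
def blockFiber (s : V → ℝ) : Set (ι × V → ℝ) :=
  {a | ∀ v, ∑ i, a (i, v) = s v}

theorem mem_blockFiber {s : V → ℝ} {a : ι × V → ℝ} : a ∈ blockFiber s ↔ blockSum a = s :=
  funext_iff.symm

/-- The orthogonal projection onto `blockFiber s`: the residual `A y - s` is spread evenly over
the blocks of `y`. Only meaningful for nonempty `ι`, as it divides by the number of blocks. -/
noncomputable def blockFiberProj (s : V → ℝ) (y : ι × V → ℝ) : ι × V → ℝ :=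
  fun p => y p - (blockSum y p.2 - s p.2) / Fintype.card ι

theorem blockFiberProj_mem [Nonempty ι] (s : V → ℝ) (y : ι × V → ℝ) :
    blockFiberProj s y ∈ blockFiber s := by
  intro v
  simp only [blockFiberProj, sum_sub_distrib, sum_const, card_univ, nsmul_eq_mul,
    ← blockSum_apply]
  field_simp
  ring

variable [Fintype V]

theorem norm2_blockSum_le (w : ι × V → ℝ) :
    norm2 (blockSum w) ≤ √(Fintype.card ι) * norm2 w := by
  rw [norm2, norm2, ← Real.sqrt_mul (Nat.cast_nonneg _)]
  apply Real.sqrt_le_sqrt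
  calc ∑ v, blockSum w v ^ 2
      ≤ ∑ v, (Fintype.card ι : ℝ) * ∑ i, w (i, v) ^ 2 :=
        sum_le_sum fun _ _ => sq_sum_le_card_mul_sum_sq
    _ = Fintype.card ι * ∑ p, w p ^ 2 := by rw [← mul_sum, Fintype.sum_prod_type_right]

theorem norm2_sub_blockFiberProj [Nonempty ι] (s : V → ℝ) (y : ι × V → ℝ) :
    norm2 (y - blockFiberProj s y) = norm2 (blockSum y - s) / √(Fintype.card ι) := by
  rw [norm2, norm2, ← Real.sqrt_div (sum_nonneg fun _ _ => sq_nonneg _)]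
  congr 1
  simp only [blockFiberProj, Pi.sub_apply, sub_sub_cancel, div_pow, Fintype.sum_prod_type,
    sum_const, card_univ, nsmul_eq_mul, ← sum_div]
  field_simp

theorem distSet_blockFiber [Nonempty ι] (s : V → ℝ) (y : ι × V → ℝ) :
    distSet y (blockFiber s) = norm2 (blockSum y - s) / √(Fintype.card ι) := by
  rw [← norm2_sub_blockFiberProj]
  refine distSet_eq_norm2_sub (blockFiberProj_mem s y) fun z hz => ?_
  rw [norm2_sub_blockFiberProj, div_le_iff₀' (by positivity), ← mem_blockFiber.1 hz, ← map_sub]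
  exact norm2_blockSum_le (y - z)

end BlockSum

theorem ell_star_from_kappa_general {ι V : Type*} [Fintype ι] [Fintype V]
    {P : Set (ι × V → ℝ)} {s : V → ℝ} {κ : ℝ} (hκ : κ ≠ 0)
    (hbound : ∀ y ∈ P \ (P ∩ blockFiber s),
      distSet y (P ∩ blockFiber s) ≤ κ * distSet y (blockFiber s))
    {x y : ι × V → ℝ} (hy : y ∈ P) (hx : x ∈ P ∩ blockFiber s)
    (hmin : ∀ z ∈ P ∩ blockFiber s, norm2 (y - x) ≤ norm2 (y - z)) :
    Fintype.card ι / κ ^ 2 * norm2 (y - x) ^ 2 ≤ norm2 (blockSum y - blockSum x) ^ 2 := by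
  obtain rfl | hne := eq_or_ne y x
  · simp [norm2]
  have hyE : y ∉ P ∩ blockFiber s := fun h => by
    have hle : norm2 (y - x) ≤ 0 := (hmin y h).trans_eq (norm2_eq_zero.2 (sub_self y))
    exact hne (sub_eq_zero.1 (norm2_eq_zero.1 (hle.antisymm (norm2_nonneg _))))
  have : Nonempty ι := not_isEmpty_iff.1 fun _ => hne (Subsingleton.elim y x)
  have hdist : norm2 (y - x) ≤ κ * (norm2 (blockSum y - blockSum x) / √(Fintype.card ι)) := by
    rw [← distSet_eq_norm2_sub hx hmin, mem_blockFiber.1 hx.2, ← distSet_blockFiber]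
    exact hbound y ⟨hy, hyE⟩
  calc Fintype.card ι / κ ^ 2 * norm2 (y - x) ^ 2
      ≤ Fintype.card ι / κ ^ 2 *
          (κ * (norm2 (blockSum y - blockSum x) / √(Fintype.card ι))) ^ 2 := by
        gcongr
        exact norm2_nonneg _
    _ = norm2 (blockSum y - blockSum x) ^ 2 := by
        rw [mul_pow, div_pow, Real.sq_sqrt (Nat.cast_nonneg _)]
        field_simp

/-- if `d(y, E) ≤ κ · d(y, 𝒜')` for all `y ∈ 𝒫 \ E`, then the
(Prox-DSFM) objective is restricted `r/κ²`-strongly convex: for every `y ∈ 𝒫` and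
closest point `y* ∈ E`, `‖A(y - y*)‖₂² ≥ (r/κ²) ‖y - y*‖₂²`. -/
theorem ell_star_from_kappa
    {V : Type*} [Fintype V] [DecidableEq V] (r : ℕ)
    (f : Fin r → Finset V → ℝ)
    (hsub : ∀ i, Submodular (f i)) (h0 : ∀ i, f i ∅ = 0)
    (sstar : V → ℝ)
    (hsB : InBasePolytope (fun S => ∑ i, f i S) sstar)
    (hsMin : ∀ z : V → ℝ, InBasePolytope (fun S => ∑ i, f i S) z →
      ∑ v, sstar v ^ 2 ≤ ∑ v, z v ^ 2)
    (P A' E : Set (Fin r × V → ℝ))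
    (hP : P = {y | ∀ i, InBasePolytope (f i) (fun v => y (i, v))})
    (hA' : A' = {a | ∀ v, ∑ i, a (i, v) = sstar v})
    (hE : E = {y ∈ P | ∀ v, ∑ i, y (i, v) = sstar v})
    (κ : ℝ) (hκ : 0 < κ)
    (hkb : ∀ y ∈ P \ E, distSet y E ≤ κ * distSet y A') :
    ∀ y ∈ P, ∀ ystar ∈ E, (∀ z ∈ E, norm2 (y - ystar) ≤ norm2 (y - z)) →
      ∑ v, ((∑ i, y (i, v)) - ∑ i, ystar (i, v)) ^ 2 ≥
        ((r : ℝ) / κ ^ 2) * ∑ p, (y p - ystar p) ^ 2 := by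
  subst hA' hE
  intro y hy x hx hmin
  simpa [sq_norm2, blockSum_apply] using ell_star_from_kappa_general hκ.ne' hkb hy hx hmin
end
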